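/- Let K : ℝ^d → ℝ be a kernel with K(−t)‖t‖² ∈ L¹(dλ(t)), let S ⊂ ℝ^d, p ∈ S, and let v ∈ ℝ^d. For any 0 < ρ₁ < ρ₂ ≤ ∞, the difference (1/ε) ∫_{((S−p)/ε) ∩ (B(0,ρ₂/ε) \ B(0,ρ₁/ε))} K(−t) (v·t) dλ(t) tends to 0 as ε → 0⁺. Consequently, if the limit lim_{ε→0⁺} (1/ε) ∫_{((S−p)/ε) ∩ B(0,ρ/ε)} K(−t) (v·t) dλ(t) exists for some ρ ∈ (0,∞], then it exists and has the same value for all ρ ∈ (0,∞]; the same holds when the integration region is replaced by 𝔸(p) ∩ B(0,ρ/ε) for any cone 𝔸(p) with vertex at the origin. -/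

import Mathlib

/-!
On a region where `R ≤ ε ‖t‖`, one power of `‖t‖` dominates `R / ε`, so
`ε⁻¹ |K(-t) ⟪v, t⟫| ≤ (‖v‖ / R) |K(-t)| ‖t‖²`. Hence the scaled integral over such a region is at
most `‖v‖ / R` times the tail over `{R ≤ ε ‖t‖}` of an integrable function, and the tail tends
to `0` by dominated convergence (`tendsto_tail`, `tendsto_far`).

Two truncation radii `ρ < ρ'` give integrals that differ by at most the integral over such a region
(`integral_trunc_sub`). If `K(-t) ⟪v, t⟫` is integrable over the larger region, this is additivity.
Otherwise it is not integrable over the smaller one either, because the annulus part is always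
integrable, and both Bochner integrals are `0` by convention.

Neither the set `S` nor the cone needs to be measurable, since only the balls are used to split
the domain.
-/

open MeasureTheory ProbabilityTheory Filter Topology
open scoped ENNReal NNReal RealInnerProductSpace

noncomputable section

/-- `ℝ^d` with the Euclidean structure. -/
abbrev Euc (d : ℕ) := EuclideanSpace ℝ (Fin d)

/-- The random graph Laplacian
`D_{ε,n} f(p) = (1/(n ε^{d+2})) ∑_{j=1}^n K((p − X_j)/ε)(f(X_j) − f(p))`. -/
def DGraph {d : ℕ} {Ω : Type*} (K f : Euc d → ℝ) (p : Euc d) (X : ℕ → Ω → Euc d)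
    (n : ℕ) (ε : ℝ) (ω : Ω) : ℝ :=
  (1 / (n * ε ^ (d + 2))) * ∑ j ∈ Finset.range n, K (ε⁻¹ • (p - X j ω)) * (f (X j ω) - f p)

/-- The averaging kernel operator `D_ε f(p) = ε^{−(d+2)} 𝔼[K((p − X)/ε)(f(X) − f(p))]`. -/
def DAvg {d : ℕ} {Ω : Type*} [MeasurableSpace Ω] (μ : Measure Ω) (K f : Euc d → ℝ)
    (p : Euc d) (X : Ω → Euc d) (ε : ℝ) : ℝ :=
  (ε ^ (d + 2))⁻¹ * ∫ ω, K (ε⁻¹ • (p - X ω)) * (f (X ω) - f p) ∂μ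

/-- Partial derivative `∂f/∂x_i`. -/
def pd {d : ℕ} (i : Fin d) (f : Euc d → ℝ) (x : Euc d) : ℝ :=
  fderiv ℝ f x (EuclideanSpace.single i 1)

/-- Second partial derivative `∂²f/∂x_i∂x_j`. -/
def pd2 {d : ℕ} (i j : Fin d) (f : Euc d → ℝ) (x : Euc d) : ℝ :=
  fderiv ℝ (fun y => fderiv ℝ f y (EuclideanSpace.single j 1)) x (EuclideanSpace.single i 1)

/-- The operator `Δ_K` associated to the kernel `K` and the density `g`. -/
def DeltaK {d : ℕ} (K f g : Euc d → ℝ) (p : Euc d) : ℝ :=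
  (∑ i, ∑ j, pd i f p * pd j g p * ∫ t : Euc d, K (-t) * t i * t j)
  + (g p / 2) * ∑ i, ∑ j, pd2 i j f p * ∫ t : Euc d, K (-t) * t i * t j

/-- The operator `Δ_{K,𝔸(p)}` associated to the kernel `K`, density `g` and cone `A`. -/
def DeltaKA {d : ℕ} (K f g : Euc d → ℝ) (A : Set (Euc d)) (p : Euc d) : ℝ :=
  (∑ i, ∑ j, pd i f p * pd j g p * ∫ t in A, K (-t) * t i * t j)
  + (g p / 2) * ∑ i, ∑ j, pd2 i j f p * ∫ t in A, K (-t) * t i * t j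

/-- Convergence in distribution (weak convergence tested against bounded continuous
functions). -/
def TendstoInDistrib {Ω : Type*} [MeasurableSpace Ω] (μ : Measure Ω)
    (Z : ℕ → Ω → ℝ) (ν : Measure ℝ) : Prop :=
  ∀ φ : BoundedContinuousFunction ℝ ℝ,
    Tendsto (fun n => ∫ ω, φ (Z n ω) ∂μ) atTop (𝓝 (∫ x, φ x ∂ν))

/-- Pointwise bound on the integrand away from the origin: one power of `‖t‖` is traded
for `ε / R`. -/
lemma norm_integrand_le {d : ℕ} (K : Euc d → ℝ) (v : Euc d) {R ε : ℝ} (hR : 0 < R)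
    (t : Euc d) (ht : R ≤ ε * ‖t‖) :
    ‖K (-t) * ⟪v, t⟫‖ ≤ ε * (‖v‖ / R) * ‖K (-t) * ‖t‖ ^ 2‖ := by
  have h1 : ‖⟪v, t⟫‖ ≤ ‖v‖ * ‖t‖ := norm_inner_le_norm v t
  have h2 : ‖v‖ * ‖t‖ ≤ ε * (‖v‖ / R) * ‖t‖ ^ 2 := by
    have h3 : ε * (‖v‖ / R) * ‖t‖ ^ 2 = (‖v‖ * ‖t‖) * ((ε * ‖t‖) / R) := by ring
    rw [h3]
    exact le_mul_of_one_le_right (by positivity) ((one_le_div hR).2 ht)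
  rw [norm_mul, norm_mul, norm_pow, norm_norm]
  calc ‖K (-t)‖ * ‖⟪v, t⟫‖ ≤ ‖K (-t)‖ * (ε * (‖v‖ / R) * ‖t‖ ^ 2) := by
        gcongr; exact h1.trans h2
    _ = _ := by ring

lemma measurableSet_far {d : ℕ} (R ε : ℝ) : MeasurableSet {t : Euc d | R ≤ ε * ‖t‖} :=
  measurableSet_le measurable_const (by fun_prop)

lemma ae_norm_integrand_le {d : ℕ} (K : Euc d → ℝ) (v : Euc d) {R ε : ℝ} (hR : 0 < R)
    {T : Set (Euc d)} (hT : T ⊆ {t | R ≤ ε * ‖t‖}) :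
    ∀ᵐ t ∂(volume.restrict T),
      ‖K (-t) * ⟪v, t⟫‖ ≤ ε * (‖v‖ / R) * ‖K (-t) * ‖t‖ ^ 2‖ := by
  -- `T` may be non-measurable, so the bound is first obtained on the measurable superset.
  refine ae_mono (Measure.restrict_mono hT le_rfl) ?_
  exact ae_restrict_of_forall_mem (measurableSet_far R ε)
    fun t ht => norm_integrand_le K v hR t ht

lemma aestronglyMeasurable_integrand {d : ℕ} (K : Euc d → ℝ)
    (hK : Integrable (fun t : Euc d => K (-t) * ‖t‖ ^ 2)) (v : Euc d) :
    AEStronglyMeasurable (fun t : Euc d => K (-t) * ⟪v, t⟫) volume := by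
  have h : (fun t : Euc d => K (-t) * ⟪v, t⟫) =
      fun t => (K (-t) * ‖t‖ ^ 2) * (⟪v, t⟫ / ‖t‖ ^ 2) := by
    funext t
    rcases eq_or_ne t 0 with rfl | ht
    · simp
    · have : ‖t‖ ≠ 0 := norm_ne_zero_iff.2 ht
      field_simp
  rw [h]
  refine hK.aestronglyMeasurable.mul (Measurable.aestronglyMeasurable ?_)
  fun_prop

lemma integrableOn_far {d : ℕ} (K : Euc d → ℝ)
    (hK : Integrable (fun t : Euc d => K (-t) * ‖t‖ ^ 2)) (v : Euc d) {R ε : ℝ} (hR : 0 < R)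
    {T : Set (Euc d)} (hT : T ⊆ {t | R ≤ ε * ‖t‖}) :
    IntegrableOn (fun t : Euc d => K (-t) * ⟪v, t⟫) T :=
  Integrable.mono' (hK.norm.const_mul _).integrableOn
    (aestronglyMeasurable_integrand K hK v).restrict (ae_norm_integrand_le K v hR hT)

lemma tendsto_tail {d : ℕ} {g : Euc d → ℝ} (hg : Integrable g) {R : ℝ} (hR : 0 < R) :
    Tendsto (fun ε : ℝ => ∫ t in {t : Euc d | R ≤ ε * ‖t‖}, ‖g t‖) (𝓝[>] (0 : ℝ)) (𝓝 0) := by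
  have h : ∀ ε : ℝ, ∫ t in {t : Euc d | R ≤ ε * ‖t‖}, ‖g t‖ =
      ∫ t, Set.indicator {t : Euc d | R ≤ ε * ‖t‖} (fun t => ‖g t‖) t := fun ε =>
    (integral_indicator (measurableSet_far R ε)).symm
  simp_rw [h]
  have h0 : 𝓝 (0 : ℝ) = 𝓝 (∫ _ : Euc d, (0 : ℝ)) := by rw [integral_zero]
  refine le_trans ?_ h0.ge
  refine tendsto_integral_filter_of_dominated_convergence (fun t => ‖g t‖) ?_ ?_ hg.norm ?_
  · exact Eventually.of_forall fun ε =>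
      hg.norm.aestronglyMeasurable.indicator (measurableSet_far R ε)
  · refine Eventually.of_forall fun ε => Eventually.of_forall fun t => ?_
    simpa using norm_indicator_le_norm_self (s := {t : Euc d | R ≤ ε * ‖t‖}) (fun t => ‖g t‖) t
  · refine Eventually.of_forall fun t => ?_
    have hlim : Tendsto (fun ε : ℝ => ε * ‖t‖) (𝓝[>] (0 : ℝ)) (𝓝 0) := by
      have : Tendsto (fun ε : ℝ => ε * ‖t‖) (𝓝 0) (𝓝 (0 * ‖t‖)) :=
        tendsto_id.mul_const _
      rw [zero_mul] at this
      exact this.mono_left nhdsWithin_le_nhds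
    refine tendsto_const_nhds.congr' ?_
    filter_upwards [hlim.eventually (gt_mem_nhds hR)] with ε hε
    exact (Set.indicator_of_notMem (by simpa using hε) _).symm

/-- The scaled integral over any regions contained in `{R ≤ ε ‖t‖}` vanishes in the limit. -/
lemma tendsto_far {d : ℕ} (K : Euc d → ℝ)
    (hK : Integrable (fun t : Euc d => K (-t) * ‖t‖ ^ 2)) (v : Euc d) {R : ℝ} (hR : 0 < R)
    (T : ℝ → Set (Euc d)) (hT : ∀ ε, 0 < ε → T ε ⊆ {t | R ≤ ε * ‖t‖}) :
    Tendsto (fun ε : ℝ => ε⁻¹ * ∫ t in T ε, K (-t) * ⟪v, t⟫) (𝓝[>] (0 : ℝ)) (𝓝 0) := by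
  have hlim := (tendsto_tail hK hR).const_mul (‖v‖ / R)
  rw [mul_zero] at hlim
  refine squeeze_zero_norm' ?_ hlim
  filter_upwards [self_mem_nhdsWithin] with ε hε
  have hε : 0 < ε := hε
  have h1 : ‖∫ t in T ε, K (-t) * ⟪v, t⟫‖ ≤
      ∫ t in T ε, ε * (‖v‖ / R) * ‖K (-t) * ‖t‖ ^ 2‖ :=
    norm_integral_le_of_norm_le (hK.norm.const_mul _).integrableOn
      (ae_norm_integrand_le K v hR (hT ε hε))
  have h2 : ∫ t in T ε, ‖K (-t) * ‖t‖ ^ 2‖ ≤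
      ∫ t in {t : Euc d | R ≤ ε * ‖t‖}, ‖K (-t) * ‖t‖ ^ 2‖ :=
    setIntegral_mono_set hK.norm.integrableOn (Eventually.of_forall fun _ => norm_nonneg _)
      (hT ε hε).eventuallyLE
  rw [integral_const_mul] at h1
  rw [norm_mul, norm_inv, Real.norm_of_nonneg hε.le, inv_mul_le_iff₀ hε, ← mul_assoc]
  exact h1.trans (mul_le_mul_of_nonneg_left h2 (by positivity))

lemma le_of_ofReal_not_lt {ρ : ℝ≥0∞} {x : ℝ} (hρ : 0 < ρ) (hρt : ρ ≠ ∞)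
    (h : ¬ ENNReal.ofReal x < ρ) : ρ.toReal ≤ x :=
  (ENNReal.le_ofReal_iff_toReal_le hρt
    (ENNReal.ofReal_pos.1 (hρ.trans_le (not_lt.1 h))).le).1 (not_lt.1 h)

/-- For two radii, the difference of the truncated integrals is bounded by the annulus integral.
An inequality is stated because, when the integrand is not integrable near the origin, both
truncated integrals have the default value `0`, whereas the annulus integral need not vanish. -/
lemma integral_trunc_sub {d : ℕ} (K : Euc d → ℝ)
    (hK : Integrable (fun t : Euc d => K (-t) * ‖t‖ ^ 2)) (v : Euc d) (B : Set (Euc d))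
    {ρ ρ' : ℝ≥0∞} (hρ : 0 < ρ) (h : ρ < ρ') (ε : ℝ) :
    |(∫ t in {t : Euc d | t ∈ B ∧ ENNReal.ofReal (ε * ‖t‖) < ρ'}, K (-t) * ⟪v, t⟫) -
        ∫ t in {t : Euc d | t ∈ B ∧ ENNReal.ofReal (ε * ‖t‖) < ρ}, K (-t) * ⟪v, t⟫| ≤
      |∫ t in {t : Euc d | t ∈ B ∧ ENNReal.ofReal (ε * ‖t‖) < ρ'} \
        {t : Euc d | ENNReal.ofReal (ε * ‖t‖) < ρ}, K (-t) * ⟪v, t⟫| := by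
  set M : Set (Euc d) := {t | ENNReal.ofReal (ε * ‖t‖) < ρ} with hM
  set s' : Set (Euc d) := {t | t ∈ B ∧ ENNReal.ofReal (ε * ‖t‖) < ρ'} with hs'
  have hMm : MeasurableSet M := measurableSet_lt (by fun_prop) measurable_const
  have hs : {t : Euc d | t ∈ B ∧ ENNReal.ofReal (ε * ‖t‖) < ρ} = s' ∩ M := by
    ext t
    exact ⟨fun ht => ⟨⟨ht.1, ht.2.trans h⟩, ht.2⟩, fun ht => ⟨ht.1.1, ht.2⟩⟩
  rw [hs]
  by_cases hi : IntegrableOn (fun t : Euc d => K (-t) * ⟪v, t⟫) s'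
  · rw [← integral_inter_add_sdiff hMm hi, add_sub_cancel_left]
  · have hi' : ¬ IntegrableOn (fun t : Euc d => K (-t) * ⟪v, t⟫) (s' ∩ M) := fun h0 => by
      refine hi ?_
      rw [← Set.inter_union_sdiff s' M]
      refine h0.union (integrableOn_far K hK v (ENNReal.toReal_pos hρ.ne' h.ne_top) (ε := ε) ?_)
      exact fun t ht => le_of_ofReal_not_lt hρ h.ne_top ht.2
    rw [integral_undef hi, integral_undef hi', sub_zero, abs_zero]
    exact abs_nonneg _

lemma tendsto_trunc_sub {d : ℕ} (K : Euc d → ℝ)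
    (hK : Integrable (fun t : Euc d => K (-t) * ‖t‖ ^ 2)) (v : Euc d) (B : ℝ → Set (Euc d))
    {ρ ρ' : ℝ≥0∞} (hρ : 0 < ρ) (h : ρ < ρ') :
    Tendsto (fun ε : ℝ =>
        ε⁻¹ * (∫ t in {t : Euc d | t ∈ B ε ∧ ENNReal.ofReal (ε * ‖t‖) < ρ'}, K (-t) * ⟪v, t⟫) -
        ε⁻¹ * ∫ t in {t : Euc d | t ∈ B ε ∧ ENNReal.ofReal (ε * ‖t‖) < ρ}, K (-t) * ⟪v, t⟫)
      (𝓝[>] (0 : ℝ)) (𝓝 0) := by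
  have hfar := tendsto_far K hK v (ENNReal.toReal_pos hρ.ne' h.ne_top)
    (fun ε => {t : Euc d | t ∈ B ε ∧ ENNReal.ofReal (ε * ‖t‖) < ρ'} \
        {t : Euc d | ENNReal.ofReal (ε * ‖t‖) < ρ})
    (fun ε _ t ht => le_of_ofReal_not_lt hρ h.ne_top ht.2)
  refine squeeze_zero_norm (fun ε => ?_) (tendsto_zero_iff_norm_tendsto_zero.1 hfar)
  rw [← mul_sub, norm_mul, norm_mul]
  exact mul_le_mul_of_nonneg_left (integral_trunc_sub K hK v (B ε) hρ h ε) (norm_nonneg _)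

/-- The limit of the truncated integrals does not depend on the radius, for arbitrary
`ε`-dependent regions. -/
lemma tendsto_trunc_of_tendsto {d : ℕ} (K : Euc d → ℝ)
    (hK : Integrable (fun t : Euc d => K (-t) * ‖t‖ ^ 2)) (v : Euc d) (B : ℝ → Set (Euc d))
    {ρ ρ' : ℝ≥0∞} {L : ℝ} (hρ : 0 < ρ) (hρ' : 0 < ρ')
    (hL : Tendsto (fun ε : ℝ => ε⁻¹ *
        ∫ t in {t : Euc d | t ∈ B ε ∧ ENNReal.ofReal (ε * ‖t‖) < ρ}, K (-t) * ⟪v, t⟫)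
      (𝓝[>] (0 : ℝ)) (𝓝 L)) :
    Tendsto (fun ε : ℝ => ε⁻¹ *
        ∫ t in {t : Euc d | t ∈ B ε ∧ ENNReal.ofReal (ε * ‖t‖) < ρ'}, K (-t) * ⟪v, t⟫)
      (𝓝[>] (0 : ℝ)) (𝓝 L) := by
  rcases lt_trichotomy ρ ρ' with h | rfl | h
  · simpa using hL.add (tendsto_trunc_sub K hK v B hρ h)
  · exact hL
  · simpa using hL.sub (tendsto_trunc_sub K hK v B hρ' h)

/-- The annulus contribution to the gradient term vanishes, hence the
limit defining the gradient condition is independent of the truncation radius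
`ρ ∈ (0,∞]`, both for the rescaled sets `(S−p)/ε` and for cones `𝔸(p)`. -/
theorem stmt10 {d : ℕ} (K : Euc d → ℝ)
    (hK : Integrable (fun t : Euc d => K (-t) * ‖t‖ ^ 2))
    (S : Set (Euc d)) (p : Euc d) (hp : p ∈ S) (v : Euc d) :
    (∀ (ρ₁ : ℝ) (ρ₂ : ℝ≥0∞), 0 < ρ₁ → ENNReal.ofReal ρ₁ < ρ₂ →
      Tendsto (fun ε : ℝ => ε⁻¹ *
          ∫ t in {t : Euc d | p + ε • t ∈ S ∧ ρ₁ ≤ ε * ‖t‖ ∧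
              ENNReal.ofReal (ε * ‖t‖) < ρ₂},
            K (-t) * ⟪v, t⟫)
        (𝓝[>] (0 : ℝ)) (𝓝 0))
    ∧ (∀ (ρ ρ' : ℝ≥0∞) (L : ℝ), 0 < ρ → 0 < ρ' →
        Tendsto (fun ε : ℝ => ε⁻¹ *
            ∫ t in {t : Euc d | p + ε • t ∈ S ∧ ENNReal.ofReal (ε * ‖t‖) < ρ},
              K (-t) * ⟪v, t⟫)
          (𝓝[>] (0 : ℝ)) (𝓝 L) →
        Tendsto (fun ε : ℝ => ε⁻¹ *
            ∫ t in {t : Euc d | p + ε • t ∈ S ∧ ENNReal.ofReal (ε * ‖t‖) < ρ'},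
              K (-t) * ⟪v, t⟫)
          (𝓝[>] (0 : ℝ)) (𝓝 L))
    ∧ (∀ A : Set (Euc d), (∀ (c : ℝ) (t : Euc d), 0 < c → (t ∈ A ↔ c • t ∈ A)) →
        ∀ (ρ ρ' : ℝ≥0∞) (L : ℝ), 0 < ρ → 0 < ρ' →
        Tendsto (fun ε : ℝ => ε⁻¹ *
            ∫ t in {t : Euc d | t ∈ A ∧ ENNReal.ofReal (ε * ‖t‖) < ρ},
              K (-t) * ⟪v, t⟫)
          (𝓝[>] (0 : ℝ)) (𝓝 L) →
        Tendsto (fun ε : ℝ => ε⁻¹ *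
            ∫ t in {t : Euc d | t ∈ A ∧ ENNReal.ofReal (ε * ‖t‖) < ρ'},
              K (-t) * ⟪v, t⟫)
          (𝓝[>] (0 : ℝ)) (𝓝 L)) := by
  refine ⟨fun ρ₁ ρ₂ hρ₁ _ => ?_, fun ρ ρ' L hρ hρ' hL => ?_, fun A _ ρ ρ' L hρ hρ' hL => ?_⟩
  · exact tendsto_far K hK v hρ₁ _ fun ε _ t ht => ht.2.1
  · exact tendsto_trunc_of_tendsto K hK v (fun ε => {t | p + ε • t ∈ S}) hρ hρ' hL
  · exact tendsto_trunc_of_tendsto K hK v (fun _ => A) hρ hρ' hL
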